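/- Suppose a_2 = −3a_4 + a_3 and a_5 = 5a_6 − 10a_7. Then for every smooth function u : ℝ × ℝ → ℝ (not necessarily a solution), the divergence identity ∂_t [(1/2) u^2] + ∂_x [ u u_{6x} − u_{5x} u_x + (a_7 u^2 + u_{2x}) u_{4x} − (1/2) u_{3x}^2 + (a_6 − 2a_7) u u_x u_{3x} + (2a_6 − 4a_7) u u_{2x}^2 + ((−a_6 + 2a_7) u_x^2 + a_4 u^3) u_{2x} + ((1/2)a_3 − (3/2)a_4) u^2 u_x^2 + (a_1/5) u^5 ] = u · E[u] holds identically in (x,t); that is, Q_3 = u is a conservation-law multiplier for the equation. -/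

import Mathlib

/-!
Both sides are polynomials in the jet coordinates `u_t`, `u`, `u_x`, …, `u_{7x}`. Smoothness of `u`
gives `∂ₓ u_{nx} = u_{(n+1)x}` (`hasDerivAt_dxN`), so the product rule expands the left-hand side.
The terms `u_x u_{6x}`, `u_{2x} u_{5x}`, `u_{3x} u_{4x}`, `u_x² u_{3x}` and `u_x u_{2x}²` cancel, and
the two coefficient relations are exactly what matches the remaining `u u_x³` and
`u u_{2x} u_{3x}` terms with those of `u · E[u]`.
-/

/-- The n-th partial derivative of `u` with respect to `x`. -/
noncomputable def dxN (n : ℕ) (u : ℝ × ℝ → ℝ) (x t : ℝ) : ℝ :=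
  iteratedDeriv n (fun x' => u (x', t)) x

/-- The partial derivative of `u` with respect to `t`. -/
noncomputable def dtU (u : ℝ × ℝ → ℝ) (x t : ℝ) : ℝ :=
  deriv (fun t' => u (x, t')) t

/-- The left-hand side `E[u]` of the generalized seventh-order KdV equation
`u_t + a1 u^3 u_x + a2 u_x^3 + a3 u u_x u_{2x} + a4 u^2 u_{3x} + a5 u_{2x} u_{3x}
 + a6 u_x u_{4x} + a7 u u_{5x} + u_{7x} = 0`. -/
noncomputable def kdvE (a1 a2 a3 a4 a5 a6 a7 : ℝ) (u : ℝ × ℝ → ℝ) (x t : ℝ) : ℝ :=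
  dtU u x t
    + a1 * (u (x, t)) ^ 3 * dxN 1 u x t
    + a2 * (dxN 1 u x t) ^ 3
    + a3 * u (x, t) * dxN 1 u x t * dxN 2 u x t
    + a4 * (u (x, t)) ^ 2 * dxN 3 u x t
    + a5 * dxN 2 u x t * dxN 3 u x t
    + a6 * dxN 1 u x t * dxN 4 u x t
    + a7 * u (x, t) * dxN 5 u x t
    + dxN 7 u x t

theorem hasDerivAt_dxN (u : ℝ × ℝ → ℝ) (hu : ContDiff ℝ (⊤ : ℕ∞) u) (n : ℕ) (x t : ℝ) :
    HasDerivAt (fun x' => dxN n u x' t) (dxN (n + 1) u x t) x := by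
  have hs : ContDiff ℝ (⊤ : ℕ∞) (fun x' : ℝ => u (x', t)) := by fun_prop
  have hd : Differentiable ℝ (iteratedDeriv n (fun x' : ℝ => u (x', t))) :=
    hs.differentiable_iteratedDeriv n (by exact_mod_cast WithTop.coe_lt_top n)
  simpa only [dxN, iteratedDeriv_succ] using (hd x).hasDerivAt

/-- if `a2 = -3 a4 + a3` and `a5 = 5 a6 - 10 a7`, then for every smooth
function `u` (not necessarily a solution), the divergence identity
`∂ₜ [(1/2) u²] + ∂ₓ X₃ = u · E[u]` holds identically; that is, `Q₃ = u` is a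
conservation-law multiplier for the generalized seventh-order KdV equation. -/
theorem multiplier_Q3 (a1 a2 a3 a4 a5 a6 a7 : ℝ)
    (ha2 : a2 = -3 * a4 + a3) (ha5 : a5 = 5 * a6 - 10 * a7)
    (u : ℝ × ℝ → ℝ) (hu : ContDiff ℝ (⊤ : ℕ∞) u) :
    ∀ x t : ℝ,
      deriv (fun t' => (1 / 2) * (u (x, t')) ^ 2) t
        + deriv (fun x' =>
            u (x', t) * dxN 6 u x' t - dxN 5 u x' t * dxN 1 u x' t
              + (a7 * (u (x', t)) ^ 2 + dxN 2 u x' t) * dxN 4 u x' t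
              - (1 / 2) * (dxN 3 u x' t) ^ 2
              + (a6 - 2 * a7) * u (x', t) * dxN 1 u x' t * dxN 3 u x' t
              + (2 * a6 - 4 * a7) * u (x', t) * (dxN 2 u x' t) ^ 2
              + ((-a6 + 2 * a7) * (dxN 1 u x' t) ^ 2 + a4 * (u (x', t)) ^ 3) * dxN 2 u x' t
              + ((1 / 2) * a3 - (3 / 2) * a4) * (u (x', t)) ^ 2 * (dxN 1 u x' t) ^ 2
              + (a1 / 5) * (u (x', t)) ^ 5) x
        = u (x, t) * kdvE a1 a2 a3 a4 a5 a6 a7 u x t := by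
  intro x t
  have ht : HasDerivAt (fun t' => u (x, t')) (dtU u x t) t := by
    have hs : ContDiff ℝ (⊤ : ℕ∞) (fun t' : ℝ => u (x, t')) := by fun_prop
    exact ((hs.differentiable (by simp)) t).hasDerivAt
  have h0 : HasDerivAt (fun x' => u (x', t)) (dxN 1 u x t) x := by
    simpa [dxN] using hasDerivAt_dxN u hu 0 x t
  have h1 := hasDerivAt_dxN u hu 1 x t
  have h2 := hasDerivAt_dxN u hu 2 x t
  have h3 := hasDerivAt_dxN u hu 3 x t
  have h4 := hasDerivAt_dxN u hu 4 x t
  have h5 := hasDerivAt_dxN u hu 5 x t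
  have h6 := hasDerivAt_dxN u hu 6 x t
  have hT := (ht.fun_pow 2).const_mul (1 / 2 : ℝ)
  -- The summands follow the order of the terms of the flux.
  have hX := ((((((((h0.fun_mul h6).fun_sub (h5.fun_mul h1)).fun_add
    ((((h0.fun_pow 2).const_mul a7).fun_add h2).fun_mul h4)).fun_sub
    ((h3.fun_pow 2).const_mul (1 / 2 : ℝ))).fun_add
    (((h0.const_mul (a6 - 2 * a7)).fun_mul h1).fun_mul h3)).fun_add
    ((h0.const_mul (2 * a6 - 4 * a7)).fun_mul (h2.fun_pow 2))).fun_add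
    ((((h1.fun_pow 2).const_mul (-a6 + 2 * a7)).fun_add
      ((h0.fun_pow 3).const_mul a4)).fun_mul h2)).fun_add
    (((h0.fun_pow 2).const_mul ((1 / 2) * a3 - (3 / 2) * a4)).fun_mul (h1.fun_pow 2))).fun_add
    ((h0.fun_pow 5).const_mul (a1 / 5))
  rw [hT.deriv, hX.deriv, kdvE, ha2, ha5]
  norm_num
  ring
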